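/- Let 𝒱₂(f)(x) = sup_{τ∈ℝ} (Σ_{I∈ℐ} |f * ℱ^{-1}[1̃_{I+τ}](x)|²)^{1/2} where ℐ = ⋃_{k∈ℕ} ℐ_k with ℐ_k = {[k + l/k, k + (l+1)/k] : 0 ≤ l < k}, and 1̃ ∈ C^∞([-1/2,1/2]) chosen with |ℱ^{-1}1̃| ≳ 1_{[-2,2]}. Then with f_N = Σ_{1≤n≤N} φ(x-n)e^{2πinx} (φ̂ between 1_{[-1/4,1/4]} and 1_{[-1/2,1/2]}), one has the pointwise lower bound 𝒱₂(f_N)(x) ≳ (log N)^{1/2} for x ∈ [1, N/2]. Consequently ‖𝒱₂(f_N)‖_p / ‖f_N‖_p ≳ (log N)^{1/2} for every 1 ≤ p < ∞, so 𝒱₂ satisfies no L^p estimates. -/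

import Mathlib

open MeasureTheory FourierTransform

/-- `f_N(x) = Σ_{1≤n≤N} φ(x-n) e^{2πinx}`. -/
noncomputable def fN (φ : SchwartzMap ℝ ℂ) (N : ℕ) (x : ℝ) : ℂ :=
  ∑ n ∈ Finset.Icc 1 N, φ (x - n) * Complex.exp (2 * Real.pi * Complex.I * (n : ℝ) * x)

/-- smooth frequency projection of `f_N` onto the translate by `τ` of the interval
`[k + l/k, k + (l+1)/k] ∈ ℐ_k` (center `k + (l+1/2)/k`, length `1/k`). -/
noncomputable def projV (t : ℝ → ℂ) (φ : SchwartzMap ℝ ℂ) (N k l : ℕ) (τ x : ℝ) : ℂ :=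
  ∫ ξ : ℝ, t ((ξ - ((k : ℝ) + ((l : ℝ) + 1/2) / k) - τ) * k) * 𝓕 (fN φ N) ξ *
    Complex.exp (2 * Real.pi * Complex.I * ξ * x)

/-- square of the square function at translation `τ`. -/
noncomputable def Vsq (t : ℝ → ℂ) (φ : SchwartzMap ℝ ℂ) (N : ℕ) (τ x : ℝ) : ℝ :=
  ∑' k : ℕ, ∑ l ∈ Finset.range k, ‖projV t φ N k l τ x‖ ^ 2

/-- the maximal-translation square function `𝒱₂(f_N)`. -/
noncomputable def V2 (t : ℝ → ℂ) (φ : SchwartzMap ℝ ℂ) (N : ℕ) (x : ℝ) : ℝ :=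
  ⨆ τ : ℝ, Real.sqrt (Vsq t φ N τ x)

lemma fhat_summand (φ : SchwartzMap ℝ ℂ) (n : ℕ) (ξ : ℝ) :
    𝓕 (fun x : ℝ => φ (x - n) * Complex.exp (2 * Real.pi * Complex.I * (n : ℝ) * x)) ξ =
      Complex.exp (-(2 * Real.pi * Complex.I * (n : ℝ) * (ξ - n))) * 𝓕 ⇑φ (ξ - n) := by
  rw [Real.fourier_eq', Real.fourier_eq', ← integral_const_mul]
  rw [← integral_add_right_eq_self (μ := volume) _ (n : ℝ)]
  congr 1
  ext y
  simp only [smul_eq_mul, add_sub_cancel_right, RCLike.inner_apply, conj_trivial]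
  rw [show ∀ a b c : ℂ, a * (b * c) = (a * c) * b by intros; ring,
    show ∀ a b c : ℂ, a * (b * c) = (a * b) * c by intros; ring, ← Complex.exp_add,
    ← Complex.exp_add]
  congr 2
  push_cast
  ring

lemma integrable_summand (φ : SchwartzMap ℝ ℂ) (n : ℕ) :
    Integrable (fun x : ℝ => φ (x - n) * Complex.exp (2 * Real.pi * Complex.I * (n : ℝ) * x)) := by
  have h : Integrable (fun x : ℝ => φ (x - n)) := φ.integrable.comp_sub_right (n : ℝ)
  refine h.mul_bdd (c := 1) ?_ ?_
  · exact (by fun_prop : Continuous fun x : ℝ =>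
      Complex.exp (2 * Real.pi * Complex.I * (n : ℝ) * x)).aestronglyMeasurable
  · refine Filter.Eventually.of_forall fun x => ?_
    rw [show (2 * Real.pi * Complex.I * (n : ℝ) * x : ℂ) = ((2 * Real.pi * n * x : ℝ) : ℂ) * Complex.I by
      push_cast; ring, Complex.norm_exp_ofReal_mul_I]

lemma fhat (φ : SchwartzMap ℝ ℂ) (N : ℕ) (ξ : ℝ) :
    𝓕 (fN φ N) ξ = ∑ n ∈ Finset.Icc 1 N,
      Complex.exp (-(2 * Real.pi * Complex.I * (n : ℝ) * (ξ - n))) * 𝓕 ⇑φ (ξ - n) := by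
  simp_rw [← fhat_summand]
  simp_rw [Real.fourier_eq']
  rw [← integral_finsetSum]
  · congr 1
    ext x
    simp only [fN, smul_eq_mul, Finset.mul_sum]
  · intro n _
    have := (Real.fourierIntegral_convergent_iff (V := ℝ) ξ).2 (integrable_summand φ n)
    refine this.congr (Filter.Eventually.of_forall fun x => ?_)
    simp only [Circle.smul_def, Real.fourierChar_apply]
    congr 2
    push_cast
    ring

lemma exp_phase_norm (r : ℝ) : ‖Complex.exp (2 * Real.pi * Complex.I * r)‖ = 1 := by
  rw [show (2 * Real.pi * Complex.I * r : ℂ) = ((2 * Real.pi * r : ℝ) : ℂ) * Complex.I by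
      push_cast; ring, Complex.norm_exp_ofReal_mul_I]

lemma fhat_phase_norm (n : ℕ) (ξ : ℝ) :
    ‖Complex.exp (-(2 * Real.pi * Complex.I * (n : ℝ) * (ξ - n)))‖ = 1 := by
  rw [← exp_phase_norm (-(n * (ξ - n)))]
  congr 2
  push_cast
  ring

lemma fhat_norm_le (φ : SchwartzMap ℝ ℂ) (N : ℕ) (ξ : ℝ)
    (h3 : ∀ ξ : ℝ, (𝓕 ⇑φ ξ).im = 0 ∧ 0 ≤ (𝓕 ⇑φ ξ).re ∧ (𝓕 ⇑φ ξ).re ≤ 1) :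
    ‖𝓕 (fN φ N) ξ‖ ≤ N := by
  rw [fhat]
  refine (norm_sum_le _ _).trans ?_
  refine (Finset.sum_le_card_nsmul _ _ 1 ?_).trans (by simp)
  intro n _
  rw [norm_mul, fhat_phase_norm, one_mul]
  obtain ⟨a, b, c⟩ := h3 (ξ - n)
  refine (Complex.norm_le_abs_re_add_abs_im _).trans ?_
  rw [a, abs_zero, add_zero, abs_of_nonneg b]
  exact c

lemma fhat_eq (φ : SchwartzMap ℝ ℂ) (N m : ℕ) (hm : 1 ≤ m) (hmN : m ≤ N) (ξ : ℝ)
    (h1 : ∀ ξ ∈ Set.Icc (-(1/4) : ℝ) (1/4), 𝓕 ⇑φ ξ = 1)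
    (h2 : ∀ ξ : ℝ, ξ ∉ Set.Icc (-(1/2) : ℝ) (1/2) → 𝓕 ⇑φ ξ = 0)
    (hξ : ξ - m ∈ Set.Icc (-(1/4) : ℝ) (1/4)) :
    𝓕 (fN φ N) ξ = Complex.exp (-(2 * Real.pi * Complex.I * (m : ℝ) * (ξ - m))) := by
  rw [fhat, Finset.sum_eq_single m]
  · rw [h1 _ hξ, mul_one]
  · intro n _ hn
    rw [h2, mul_zero]
    rintro ⟨ha, hb⟩
    obtain ⟨hc, hd⟩ := hξ
    rcases Nat.lt_or_gt_of_ne hn with h | h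
    · have : (n : ℝ) + 1 ≤ m := by exact_mod_cast h
      linarith
    · have : (m : ℝ) + 1 ≤ n := by exact_mod_cast h
      linarith
  · intro h
    exact absurd (Finset.mem_Icc.2 ⟨hm, hmN⟩) h

lemma integral_scale (G : ℝ → ℂ) (c s : ℝ) (k : ℕ) :
    ∫ ξ : ℝ, G ((ξ - c - s) * k) = (1 / (k : ℝ)) • ∫ u, G u := by
  have h1 : ∫ ξ : ℝ, G ((ξ - c - s) * k) = ∫ ξ : ℝ, G (ξ * k) := by
    simp_rw [sub_sub]
    exact integral_sub_right_eq_self (fun ξ : ℝ => G (ξ * k)) (c + s)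
  rw [h1, Measure.integral_comp_mul_right]
  congr 1
  rw [abs_of_nonneg (by positivity)]
  simp

lemma proj_lower (t : ℝ → ℂ)
    (htsupp : ∀ ξ : ℝ, ξ ∉ Set.Icc (-(1/2) : ℝ) (1/2) → t ξ = 0)
    (c₀ : ℝ)
    (htlow : ∀ x ∈ Set.Icc (-2 : ℝ) 2,
      c₀ ≤ ‖∫ ξ : ℝ, t ξ * Complex.exp (2 * Real.pi * Complex.I * ξ * x)‖)
    (φ : SchwartzMap ℝ ℂ)
    (h1 : ∀ ξ ∈ Set.Icc (-(1/4) : ℝ) (1/4), 𝓕 ⇑φ ξ = 1)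
    (h2 : ∀ ξ : ℝ, ξ ∉ Set.Icc (-(1/2) : ℝ) (1/2) → 𝓕 ⇑φ ξ = 0)
    (N k l m : ℕ) (hk : 1 ≤ k) (hm : 1 ≤ m) (hmN : m ≤ N) (τ x : ℝ) (hτ : τ = (m : ℝ) - k)
    (hl : 4 * (l + 1) ≤ k) (hx : |x - m| ≤ 2 * k) :
    c₀ / k ≤ ‖projV t φ N k l τ x‖ := by
  have hk0 : (0 : ℝ) < k := by exact_mod_cast hk
  set c : ℝ := (k : ℝ) + ((l : ℝ) + 1/2) / k with hc
  let G : ℝ → ℂ := fun u => Complex.exp (2 * Real.pi * Complex.I *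
      ((m ^ 2 + (c + τ) * (x - m) : ℝ) : ℂ)) *
    (t u * Complex.exp (2 * Real.pi * Complex.I * u * (((x - m) / k : ℝ) : ℂ)))
  have key : projV t φ N k l τ x = ∫ ξ : ℝ, G ((ξ - c - τ) * k) := by
    unfold projV
    congr 1
    ext ξ
    rw [← hc]
    simp only [G]
    by_cases hu : (ξ - c - τ) * k ∈ Set.Icc (-(1/2) : ℝ) (1/2)
    · rw [fhat_eq φ N m hm hmN ξ h1 h2]
      · rw [show ∀ a b c : ℂ, a * (b * c) = b * (a * c) by intros; ring, mul_assoc,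
          ← Complex.exp_add, ← Complex.exp_add]
        congr 2
        have : (k : ℂ) ≠ 0 := by exact_mod_cast hk0.ne'
        push_cast
        field_simp
        ring
      · have e : ξ - m = ((ξ - c - τ) * k + (l + 1/2)) / k := by
          rw [hc, hτ]; field_simp; ring
        have hl' : 4 * ((l : ℝ) + 1) ≤ k := by exact_mod_cast hl
        rw [e]
        obtain ⟨ha, hb⟩ := hu
        have : (0 : ℝ) ≤ l := by positivity
        constructor
        · rw [le_div_iff₀ hk0]; linarith
        · rw [div_le_iff₀ hk0]; linarith
    · rw [htsupp _ hu]; simp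
  rw [key, integral_scale, norm_smul]
  simp only [G]
  rw [integral_const_mul, norm_mul, exp_phase_norm, one_mul]
  have := htlow ((x - m) / k) (by
    rw [abs_le] at hx
    constructor
    · rw [le_div_iff₀ hk0]; linarith
    · rw [div_le_iff₀ hk0]; linarith)
  rw [Real.norm_of_nonneg (by positivity), div_eq_mul_one_div, mul_comm]
  gcongr

lemma proj_upper (t : ℝ → ℂ) (ht : Integrable t) (φ : SchwartzMap ℝ ℂ)
    (h3 : ∀ ξ : ℝ, (𝓕 ⇑φ ξ).im = 0 ∧ 0 ≤ (𝓕 ⇑φ ξ).re ∧ (𝓕 ⇑φ ξ).re ≤ 1)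
    (N k l : ℕ) (hk : 1 ≤ k) (τ x : ℝ) :
    ‖projV t φ N k l τ x‖ ≤ N * (∫ u, ‖t u‖) / k := by
  have hk0 : (0 : ℝ) < k := by exact_mod_cast hk
  set c : ℝ := (k : ℝ) + ((l : ℝ) + 1/2) / k with hc
  have hI : Integrable (fun ξ : ℝ => ‖t ((ξ - c - τ) * k)‖ * N) := by
    have := ((ht.comp_mul_right' hk0.ne').comp_sub_right (c + τ)).norm.mul_const (N : ℝ)
    refine this.congr (Filter.Eventually.of_forall fun ξ => ?_)
    simp [sub_sub]
  have hB : ‖projV t φ N k l τ x‖ ≤ ∫ ξ : ℝ, ‖t ((ξ - c - τ) * k)‖ * N := by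
    refine norm_integral_le_of_norm_le hI (Filter.Eventually.of_forall fun ξ => ?_)
    rw [norm_mul, norm_mul]
    have e := exp_phase_norm (ξ * x)
    rw [show (2 * Real.pi * Complex.I * ((ξ * x : ℝ) : ℂ)) = 2 * Real.pi * Complex.I * ξ * x by
      push_cast; ring] at e
    rw [e, mul_one]
    gcongr
    exact fhat_norm_le φ N ξ h3
  refine hB.trans (le_of_eq ?_)
  rw [integral_mul_const]
  have h1 : ∫ ξ : ℝ, ‖t ((ξ - c - τ) * k)‖ = ∫ ξ : ℝ, ‖t (ξ * k)‖ := by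
    simp_rw [sub_sub]
    exact integral_sub_right_eq_self (fun ξ : ℝ => ‖t (ξ * k)‖) (c + τ)
  rw [h1, Measure.integral_comp_mul_right (fun u => ‖t u‖) (k : ℝ), abs_of_nonneg (by positivity),
    smul_eq_mul]
  field_simp

lemma proj_zero (t : ℝ → ℂ)
    (htsupp : ∀ ξ : ℝ, ξ ∉ Set.Icc (-(1/2) : ℝ) (1/2) → t ξ = 0)
    (φ : SchwartzMap ℝ ℂ)
    (h2 : ∀ ξ : ℝ, ξ ∉ Set.Icc (-(1/2) : ℝ) (1/2) → 𝓕 ⇑φ ξ = 0)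
    (N k l : ℕ) (hl : l < k) (τ x : ℝ)
    (hS : k ∉ Finset.Icc ⌈-1/2 - τ⌉₊ (⌈-1/2 - τ⌉₊ + N + 1)) :
    projV t φ N k l τ x = 0 := by
  have hk0 : (0 : ℝ) < k := by exact_mod_cast (by omega : 0 < k)
  unfold projV
  rw [← integral_zero ℝ ℂ (μ := volume)]
  congr 1
  ext ξ
  by_cases hu : (ξ - ((k : ℝ) + ((l : ℝ) + 1/2) / k) - τ) * k ∈ Set.Icc (-(1/2) : ℝ) (1/2)
  swap
  · rw [htsupp _ hu]; simp
  obtain ⟨ha, hb⟩ := hu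
  have hl' : (l : ℝ) + 1 ≤ k := by exact_mod_cast hl
  have e : (ξ - ((k : ℝ) + ((l : ℝ) + 1/2) / k) - τ) * k = (ξ - k - τ) * k - (l + 1/2) := by
    field_simp
    ring
  rw [e] at ha hb
  have hξ1 : (0 : ℝ) ≤ ξ - k - τ := by
    have : 0 ≤ (ξ - k - τ) * k := by have : (0 : ℝ) ≤ l := by positivity
                                     linarith
    exact nonneg_of_mul_nonneg_left this hk0
  have hξ2 : ξ - k - τ ≤ 1 := by
    have : (ξ - k - τ) * k ≤ 1 * k := by linarith
    exact le_of_mul_le_mul_right this hk0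
  have : 𝓕 (fN φ N) ξ = 0 := by
    rw [fhat]
    refine Finset.sum_eq_zero fun n hn => ?_
    rw [h2, mul_zero]
    rintro ⟨hc, hd⟩
    apply hS
    obtain ⟨hn1, hn2⟩ := Finset.mem_Icc.1 hn
    have hn1' : (1 : ℝ) ≤ n := by exact_mod_cast hn1
    have hn2' : (n : ℝ) ≤ N := by exact_mod_cast hn2
    rw [Finset.mem_Icc]
    constructor
    · rw [Nat.ceil_le]; linarith
    · have := Nat.le_ceil (-1/2 - τ)
      have h : (k : ℝ) ≤ (⌈-1/2 - τ⌉₊ : ℝ) + N + 1 := by linarith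
      exact_mod_cast h
  rw [this]; simp

lemma inner_zero (t : ℝ → ℂ)
    (htsupp : ∀ ξ : ℝ, ξ ∉ Set.Icc (-(1/2) : ℝ) (1/2) → t ξ = 0)
    (φ : SchwartzMap ℝ ℂ)
    (h2 : ∀ ξ : ℝ, ξ ∉ Set.Icc (-(1/2) : ℝ) (1/2) → 𝓕 ⇑φ ξ = 0)
    (N : ℕ) (τ x : ℝ) (k : ℕ)
    (hS : k ∉ Finset.Icc ⌈-1/2 - τ⌉₊ (⌈-1/2 - τ⌉₊ + N + 1)) :
    ∑ l ∈ Finset.range k, ‖projV t φ N k l τ x‖ ^ 2 = 0 := by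
  refine Finset.sum_eq_zero fun l hl => ?_
  rw [proj_zero t htsupp φ h2 N k l (Finset.mem_range.1 hl) τ x hS]; simp

lemma Vsq_upper (t : ℝ → ℂ) (ht : Integrable t)
    (htsupp : ∀ ξ : ℝ, ξ ∉ Set.Icc (-(1/2) : ℝ) (1/2) → t ξ = 0)
    (φ : SchwartzMap ℝ ℂ)
    (h2 : ∀ ξ : ℝ, ξ ∉ Set.Icc (-(1/2) : ℝ) (1/2) → 𝓕 ⇑φ ξ = 0)
    (h3 : ∀ ξ : ℝ, (𝓕 ⇑φ ξ).im = 0 ∧ 0 ≤ (𝓕 ⇑φ ξ).re ∧ (𝓕 ⇑φ ξ).re ≤ 1)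
    (N : ℕ) (τ x : ℝ) :
    Vsq t φ N τ x ≤ (N + 2) * (N * (∫ u, ‖t u‖)) ^ 2 := by
  unfold Vsq
  rw [tsum_eq_sum (fun k hk => inner_zero t htsupp φ h2 N τ x k hk)]
  refine (Finset.sum_le_card_nsmul _ _ ((N * (∫ u, ‖t u‖)) ^ 2) ?_).trans ?_
  · intro k _
    rcases Nat.eq_zero_or_pos k with rfl | hk
    · simp; positivity
    have hk1 : (1 : ℝ) ≤ k := by exact_mod_cast hk
    refine (Finset.sum_le_card_nsmul _ _ ((N * (∫ u, ‖t u‖) / k) ^ 2) ?_).trans ?_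
    · intro l _
      have := proj_upper t ht φ h3 N k l hk τ x
      gcongr
    · rw [Finset.card_range, nsmul_eq_mul, div_pow, mul_div_assoc', div_le_iff₀ (by positivity)]
      nlinarith [sq_nonneg (N * (∫ u, ‖t u‖)), mul_nonneg (sq_nonneg (N * (∫ u, ‖t u‖))) (by nlinarith : (0:ℝ) ≤ (k:ℝ)^2 - k)]
  · rw [Nat.card_Icc, nsmul_eq_mul]
    refine le_of_eq ?_
    rw [show ⌈-1/2 - τ⌉₊ + N + 1 + 1 - ⌈-1/2 - τ⌉₊ = N + 2 by omega]
    push_cast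
    rfl

lemma Vsq_lower (t : ℝ → ℂ)
    (htsupp : ∀ ξ : ℝ, ξ ∉ Set.Icc (-(1/2) : ℝ) (1/2) → t ξ = 0)
    (c₀ : ℝ) (hc₀ : 0 < c₀)
    (htlow : ∀ x ∈ Set.Icc (-2 : ℝ) 2,
      c₀ ≤ ‖∫ ξ : ℝ, t ξ * Complex.exp (2 * Real.pi * Complex.I * ξ * x)‖)
    (φ : SchwartzMap ℝ ℂ)
    (h1 : ∀ ξ ∈ Set.Icc (-(1/4) : ℝ) (1/4), 𝓕 ⇑φ ξ = 1)
    (h2 : ∀ ξ : ℝ, ξ ∉ Set.Icc (-(1/2) : ℝ) (1/2) → 𝓕 ⇑φ ξ = 0)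
    (N : ℕ) (hN : 2 ≤ N) (x : ℝ) (hx1 : 1 ≤ x) (hx2 : x < N / 2 + 1) :
    ∃ τ : ℝ, (c₀ / 8) ^ 2 * Real.log N ≤ Vsq t φ N τ x := by
  set a := ⌊x⌋₊ with ha
  have hax : (a : ℝ) ≤ x := Nat.floor_le (by linarith)
  have hxa : x < a + 1 := Nat.lt_floor_add_one x
  have ha1 : 1 ≤ a := Nat.le_floor (by simpa using hx1)
  have ha2 : 2 * a < N + 2 := by
    have : (2 : ℝ) * a < N + 2 := by linarith
    exact_mod_cast this
  obtain ⟨M, hM⟩ : ∃ M, M = N - a + 1 := ⟨_, rfl⟩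
  have hsum : Summable fun k : ℕ => ∑ l ∈ Finset.range k, ‖projV t φ N k l ((a : ℝ) - 4) x‖ ^ 2 :=
    summable_of_ne_finset_zero (fun k hk => inner_zero t htsupp φ h2 N _ x k hk)
  refine ⟨(a : ℝ) - 4, ?_⟩
  have step : ∑ i ∈ Finset.range M, c₀ ^ 2 / 32 * (1 / ((i : ℝ) + 1)) ≤ Vsq t φ N ((a : ℝ) - 4) x := by
    refine le_trans ?_ (hsum.sum_le_tsum ((Finset.range M).map (addRightEmbedding 4))
      (fun k _ => Finset.sum_nonneg fun l _ => by positivity))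
    rw [Finset.sum_map]
    refine Finset.sum_le_sum fun i hi => ?_
    have hi' := Finset.mem_range.1 hi
    simp only [addRightEmbedding_apply]
    obtain ⟨k, hk⟩ : ∃ k, k = i + 4 := ⟨_, rfl⟩
    rw [← hk]
    have hkR : (k : ℝ) = i + 4 := by rw [hk]; push_cast; ring
    have hq : k ≤ 8 * (k / 4) := by omega
    have hqR : (k : ℝ) ≤ 8 * ((k / 4 : ℕ) : ℝ) := by exact_mod_cast hq
    have hlow : ∑ l ∈ Finset.range (k / 4), (c₀ / k) ^ 2 ≤
        ∑ l ∈ Finset.range k, ‖projV t φ N k l ((a : ℝ) - 4) x‖ ^ 2 := by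
      refine (Finset.sum_le_sum fun l hl => ?_).trans
        (Finset.sum_le_sum_of_subset_of_nonneg (Finset.range_mono (Nat.div_le_self k 4))
          (fun l _ _ => by positivity))
      have hl' := Finset.mem_range.1 hl
      have := proj_lower t htsupp c₀ htlow φ h1 h2 N k l (a + i) (by omega) (by omega) (by omega)
        ((a : ℝ) - 4) x (by rw [hkR]; push_cast; ring) (by omega) (by
          have : (0 : ℝ) ≤ i := by positivity
          rw [abs_le, hkR]; push_cast; constructor <;> linarith)
      gcongr
    refine le_trans ?_ hlow
    have hi0 : (0 : ℝ) ≤ i := by positivity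
    rw [Finset.sum_const, Finset.card_range, nsmul_eq_mul, div_pow]
    have hk0 : (0 : ℝ) < k := by rw [hkR]; positivity
    calc c₀ ^ 2 / 32 * (1 / ((i : ℝ) + 1)) ≤ c₀ ^ 2 / 8 * (1 / k) := by
          rw [show c₀ ^ 2 / 32 * (1 / ((i : ℝ) + 1)) = c₀ ^ 2 / 8 * (1 / (4 * ((i : ℝ) + 1))) by
            field_simp; norm_num]
          gcongr
          linarith
      _ = (k / 8) * (c₀ ^ 2 / k ^ 2) := by field_simp
      _ ≤ _ := by gcongr; linarith
  refine le_trans ?_ step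
  rw [← Finset.mul_sum]
  have hH := log_add_one_le_harmonic M
  have e : ((harmonic M : ℚ) : ℝ) = ∑ i ∈ Finset.range M, (1 / ((i : ℝ) + 1)) := by
    simp [harmonic]
  rw [← e]
  have hlog : Real.log N ≤ 2 * Real.log ((M : ℝ) + 1) := by
    have hMN : (N : ℝ) + 3 ≤ 2 * ((M : ℝ) + 1) := by
      have : N + 3 ≤ 2 * (M + 1) := by omega
      exact_mod_cast this
    have hN0 : (2 : ℝ) ≤ N := by exact_mod_cast hN
    rw [show 2 * Real.log ((M : ℝ) + 1) = Real.log (((M : ℝ) + 1) ^ 2) by simp]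
    apply Real.log_le_log (by linarith)
    nlinarith
  push_cast at hH
  have : 0 < c₀ ^ 2 := by positivity
  nlinarith

lemma fN_bdd (φ : SchwartzMap ℝ ℂ) : ∃ A : ℝ, 0 < A ∧ ∀ N x, ‖fN φ N x‖ ≤ A := by
  obtain ⟨C0, hC0⟩ := φ.decay 0 0
  obtain ⟨C2, hC2⟩ := φ.decay 2 0
  obtain ⟨hC0p, hC0⟩ := hC0
  obtain ⟨hC2p, hC2⟩ := hC2
  have hφ : ∀ y, ‖φ y‖ ≤ (C0 + C2) * (1 / (1 + y ^ 2)) := by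
    intro y
    have a := hC0 y
    have b := hC2 y
    simp at a b
    rw [mul_one_div, le_div_iff₀ (by positivity)]
    linarith
  have hs : Summable fun d : ℤ => 1 / (1 + (d : ℝ) ^ 2) := by
    have : Summable fun d : ℤ => 1 / (d : ℝ) ^ 2 := Real.summable_one_div_int_pow.2 (by norm_num)
    refine (this.add (hasSum_ite_eq (0 : ℤ) (1 : ℝ)).summable).of_nonneg_of_le
      (fun d => by positivity) (fun d => ?_)
    rcases eq_or_ne d 0 with rfl | hd
    · simp
    · have : (0 : ℝ) < (d : ℝ) ^ 2 := by positivity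
      simp only [hd, if_false, add_zero]
      gcongr
      linarith
  refine ⟨(C0 + C2) * (3 * ∑' d : ℤ, 1 / (1 + (d : ℝ) ^ 2)) + 1, ?_, fun N x => ?_⟩
  · have : 0 ≤ ∑' d : ℤ, 1 / (1 + (d : ℝ) ^ 2) := tsum_nonneg fun d => by positivity
    positivity
  · unfold fN
    refine (norm_sum_le _ _).trans (le_trans ?_ (le_add_of_nonneg_right zero_le_one))
    have hb : ∀ n ∈ Finset.Icc 1 N,
        ‖φ (x - n) * Complex.exp (2 * Real.pi * Complex.I * (n : ℝ) * x)‖ ≤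
          (C0 + C2) * (3 * (1 / (1 + (((n : ℤ) - ⌊x⌋ : ℤ) : ℝ) ^ 2))) := by
      intro n _
      have e := exp_phase_norm (n * x)
      rw [show (2 * Real.pi * Complex.I * ((n * x : ℝ) : ℂ)) =
        2 * Real.pi * Complex.I * (n : ℝ) * x by push_cast; ring] at e
      rw [norm_mul, e, mul_one]
      refine (hφ _).trans ?_
      gcongr
      rw [mul_one_div, div_le_div_iff₀ (by positivity) (by positivity)]
      push_cast
      have f1 := Int.floor_le x
      have f2 := Int.lt_floor_add_one x
      have : (x - (⌊x⌋ : ℝ)) ^ 2 ≤ 1 := by nlinarith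
      nlinarith [sq_nonneg ((x - n) + (x - (⌊x⌋ : ℝ))), sq_nonneg ((x - n) - (x - (⌊x⌋ : ℝ)))]
    refine (Finset.sum_le_sum hb).trans ?_
    rw [← Finset.mul_sum, ← Finset.mul_sum]
    have hinj : Function.Injective fun n : ℕ => ((n : ℤ) - ⌊x⌋ : ℤ) := by
      intro a b hab
      simp at hab
      exact hab
    have := hs.sum_le_tsum ((Finset.Icc 1 N).map ⟨_, hinj⟩) (fun d _ => by positivity)
    rw [Finset.sum_map] at this
    simp only [Function.Embedding.coeFn_mk] at this
    gcongr

lemma fN_L1 (φ : SchwartzMap ℝ ℂ) (N : ℕ) :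
    ∫⁻ x, ‖fN φ N x‖ₑ ≤ N * ∫⁻ x, ‖φ x‖ₑ := by
  calc ∫⁻ x, ‖fN φ N x‖ₑ ≤ ∫⁻ x, ∑ n ∈ Finset.Icc 1 N, ‖φ (x - n)‖ₑ := by
        refine lintegral_mono fun x => ?_
        unfold fN
        refine (enorm_sum_le _ _).trans (Finset.sum_le_sum fun n _ => ?_)
        have e := exp_phase_norm (n * x)
        rw [show (2 * Real.pi * Complex.I * ((n * x : ℝ) : ℂ)) =
          2 * Real.pi * Complex.I * (n : ℝ) * x by push_cast; ring] at e
        rw [enorm_mul, ← ofReal_norm (Complex.exp _), e]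
        simp
    _ = ∑ n ∈ Finset.Icc 1 N, ∫⁻ x, ‖φ (x - n)‖ₑ := by
        rw [lintegral_finsetSum]
        intro n _
        have : Continuous fun x : ℝ => φ (x - n) := φ.continuous.comp (by fun_prop)
        exact this.enorm.measurable
    _ = ∑ n ∈ Finset.Icc 1 N, ∫⁻ x, ‖φ x‖ₑ := by
        refine Finset.sum_congr rfl fun n _ => ?_
        exact lintegral_sub_right_eq_self (fun x => ‖φ x‖ₑ) (n : ℝ)
    _ = _ := by simp

lemma fN_Lp (φ : SchwartzMap ℝ ℂ) (p : ℝ) (hp : 1 ≤ p) :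
    ∃ B : ℝ, 0 < B ∧ ∀ N : ℕ, eLpNorm (fN φ N) (ENNReal.ofReal p) volume ≤
      ENNReal.ofReal ((B * N) ^ (1 / p)) := by
  obtain ⟨A, hA, hfA⟩ := fN_bdd φ
  have hfin : ∫⁻ x, ‖φ x‖ₑ ≠ ⊤ := φ.integrable.2.ne
  refine ⟨A ^ (p - 1) * ((∫⁻ x, ‖φ x‖ₑ).toReal + 1), by positivity, fun N => ?_⟩
  have hp0 : 0 < p := by linarith
  rw [eLpNorm_eq_lintegral_rpow_enorm_toReal (by simpa using hp0) (by simp),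
    ENNReal.toReal_ofReal hp0.le, ← ENNReal.ofReal_rpow_of_nonneg (by positivity) (by positivity)]
  refine ENNReal.rpow_le_rpow ?_ (by positivity)
  calc ∫⁻ x, ‖fN φ N x‖ₑ ^ p ≤ ∫⁻ x, ENNReal.ofReal (A ^ (p - 1)) * ‖fN φ N x‖ₑ := by
        refine lintegral_mono fun x => ?_
        simp only
        rw [← ofReal_norm, ENNReal.ofReal_rpow_of_nonneg (norm_nonneg _) hp0.le,
          ← ENNReal.ofReal_mul (by positivity)]
        apply ENNReal.ofReal_le_ofReal
        rcases (norm_nonneg (fN φ N x)).eq_or_lt with h | h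
        · rw [← h, Real.zero_rpow hp0.ne']; simp
        · rw [show p = (p - 1) + 1 by ring, Real.rpow_add h, Real.rpow_one]
          have := hfA N x
          have hp1 : 0 ≤ p - 1 := by linarith
          simp only [add_sub_cancel_right]
          gcongr
    _ = ENNReal.ofReal (A ^ (p - 1)) * ∫⁻ x, ‖fN φ N x‖ₑ :=
        lintegral_const_mul' _ _ ENNReal.ofReal_ne_top
    _ ≤ ENNReal.ofReal (A ^ (p - 1)) * (N * ENNReal.ofReal ((∫⁻ x, ‖φ x‖ₑ).toReal + 1)) := by
        gcongr
        refine (fN_L1 φ N).trans ?_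
        gcongr
        refine le_trans (by rw [ENNReal.ofReal_toReal hfin]) (ENNReal.ofReal_le_ofReal (le_add_of_nonneg_right zero_le_one))
    _ = _ := by
        rw [← ENNReal.ofReal_natCast, ← ENNReal.ofReal_mul (by positivity),
          ← ENNReal.ofReal_mul (by positivity)]
        congr 1; ring

/-- `𝒱₂` counterexample: with `1̃ ∈ C^∞([-1/2,1/2])`, `|ℱ^{-1}1̃| ≳ 1_{[-2,2]}`, and
`φ̂` sandwiched between `1_{[-1/4,1/4]}` and `1_{[-1/2,1/2]}`, one has
`𝒱₂(f_N)(x) ≳ (log N)^{1/2}` on `[1, N/2]`, and hence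
`‖𝒱₂(f_N)‖_p ≳ (log N)^{1/2}‖f_N‖_p` for every `1 ≤ p < ∞`. -/
theorem stmt_16 (t : ℝ → ℂ)
    (htsupp : ∀ ξ : ℝ, ξ ∉ Set.Icc (-(1/2) : ℝ) (1/2) → t ξ = 0)
    (c₀ : ℝ) (hc₀ : 0 < c₀)
    (htlow : ∀ x ∈ Set.Icc (-2 : ℝ) 2,
      c₀ ≤ ‖∫ ξ : ℝ, t ξ * Complex.exp (2 * Real.pi * Complex.I * ξ * x)‖)
    (φ : SchwartzMap ℝ ℂ)
    (h1 : ∀ ξ ∈ Set.Icc (-(1/4) : ℝ) (1/4), 𝓕 ⇑φ ξ = 1)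
    (h2 : ∀ ξ : ℝ, ξ ∉ Set.Icc (-(1/2) : ℝ) (1/2) → 𝓕 ⇑φ ξ = 0)
    (h3 : ∀ ξ : ℝ, (𝓕 ⇑φ ξ).im = 0 ∧ 0 ≤ (𝓕 ⇑φ ξ).re ∧ (𝓕 ⇑φ ξ).re ≤ 1) :
    (∃ c : ℝ, 0 < c ∧ ∀ N : ℕ, 2 ≤ N → ∀ x ∈ Set.Icc (1 : ℝ) (N / 2),
      ∃ τ : ℝ, c * Real.sqrt (Real.log N) ≤ Real.sqrt (Vsq t φ N τ x)) ∧
    ∀ p : ℝ, 1 ≤ p → ∃ cp : ℝ, 0 < cp ∧ ∀ N : ℕ, 2 ≤ N →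
      ENNReal.ofReal (cp * Real.sqrt (Real.log N)) *
          eLpNorm (fN φ N) (ENNReal.ofReal p) volume ≤
        eLpNorm (V2 t φ N) (ENNReal.ofReal p) volume := by
  have hlow := Vsq_lower t htsupp c₀ hc₀ htlow φ h1 h2
  have hlow' : ∀ N : ℕ, 2 ≤ N → ∀ x : ℝ, 1 ≤ x → x < N / 2 + 1 →
      ∃ τ : ℝ, c₀ / 8 * Real.sqrt (Real.log N) ≤ Real.sqrt (Vsq t φ N τ x) := by
    intro N hN x hx1 hx2
    obtain ⟨τ, h⟩ := hlow N hN x hx1 hx2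
    refine ⟨τ, ?_⟩
    apply Real.le_sqrt_of_sq_le
    rw [mul_pow, Real.sq_sqrt (Real.log_natCast_nonneg N)]
    exact h
  refine ⟨⟨c₀ / 8, by positivity, fun N hN x hx => hlow' N hN x hx.1 (by linarith [hx.2])⟩, ?_⟩
  intro p hp
  have hp0 : 0 < p := by linarith
  have ht : Integrable t := by
    have h0 := htlow 0 (by norm_num)
    by_contra hni
    simp only [Complex.ofReal_zero, mul_zero, Complex.exp_zero, mul_one] at h0
    rw [integral_undef hni, norm_zero] at h0
    linarith
  obtain ⟨B, hB, hfB⟩ := fN_Lp φ p hp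
  refine ⟨c₀ / 8 / (2 * B) ^ (1 / p), by positivity, fun N hN => ?_⟩
  have hN0 : (2 : ℝ) ≤ N := by exact_mod_cast hN
  set L := Real.sqrt (Real.log N) with hL
  have hL0 : 0 ≤ L := Real.sqrt_nonneg _
  have hV : ∀ x ∈ Set.Ico (1 : ℝ) (N / 2 + 1), c₀ / 8 * L ≤ V2 t φ N x := by
    intro x hx
    obtain ⟨τ, h⟩ := hlow' N hN x hx.1 hx.2
    refine h.trans ?_
    unfold V2
    refine le_ciSup (f := fun τ => Real.sqrt (Vsq t φ N τ x)) ?_ τ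
    refine ⟨Real.sqrt ((N + 2) * (N * (∫ u, ‖t u‖)) ^ 2), ?_⟩
    rintro _ ⟨σ, rfl⟩
    exact Real.sqrt_le_sqrt (Vsq_upper t ht htsupp φ h2 h3 N σ x)
  have hmono : eLpNorm ((Set.Ico (1 : ℝ) (N / 2 + 1)).indicator fun _ => c₀ / 8 * L)
      (ENNReal.ofReal p) volume ≤ eLpNorm (V2 t φ N) (ENNReal.ofReal p) volume := by
    refine eLpNorm_mono fun x => ?_
    by_cases hx : x ∈ Set.Ico (1 : ℝ) (N / 2 + 1)
    · rw [Set.indicator_of_mem hx, Real.norm_of_nonneg (by positivity)]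
      exact (hV x hx).trans (le_abs_self _)
    · rw [Set.indicator_of_notMem hx]; simp
  refine le_trans ?_ hmono
  rw [eLpNorm_indicator_const measurableSet_Ico (by simpa using hp0) (by simp),
    ENNReal.toReal_ofReal hp0.le, Real.volume_Ico, Real.enorm_of_nonneg (by positivity),
    ENNReal.ofReal_rpow_of_nonneg (by linarith) (by positivity), ← ENNReal.ofReal_mul (by positivity)]
  refine (mul_le_mul_right (hfB N) _).trans ?_
  rw [← ENNReal.ofReal_mul (by positivity)]
  apply ENNReal.ofReal_le_ofReal
  refine le_of_eq ?_
  have hr : (B * (N : ℝ)) ^ (1 / p) = (2 * B) ^ (1 / p) * ((N : ℝ) / 2 + 1 - 1) ^ (1 / p) := by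
    rw [← Real.mul_rpow (by positivity) (by linarith)]
    congr 1
    ring
  rw [hr]
  have hne : (2 * B) ^ (1 / p) ≠ 0 := by positivity
  generalize (2 * B) ^ (1 / p) = a at *
  generalize ((N : ℝ) / 2 + 1 - 1) ^ (1 / p) = b
  field_simp
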